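/- arXiv:2502.01556 — 5 statements merged into one kernel-verified Lean document; each statement's English description precedes it below -/
import Mathlib

section
/- Let η > 0, β > 0, J₀ ∈ ℝ^{N×p}, J' ∈ ℝ^{N'×p}, θ₀ ∈ ℝ^p, f₀, y ∈ ℝ^N and f₀' ∈ ℝ^{N'}. Let θ(t) be the solution of the regularized linearized gradient flow θ'(t) = −η[(J₀ᵀJ₀ + βI_p)(θ(t) − θ₀) + J₀ᵀ(f₀ − y)], θ(0) = θ₀. Then the linearized test predictions f₀' + J'(θ(t) − θ₀) converge as t → ∞ to f₀' + Θ̂'(Θ̂ + βI_N)^{-1}(y − f₀), where Θ̂ := J₀J₀ᵀ and Θ̂' := J'J₀ᵀ. -/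
open Matrix Filter

/-!
The vector `v = J₀ᵀ(J₀J₀ᵀ + βI)⁻¹(y - f₀)` is the equilibrium of the flow of `θ - θ₀`: the
push-through identity `(J₀ᵀJ₀ + βI)J₀ᵀ = J₀ᵀ(J₀J₀ᵀ + βI)` gives `(J₀ᵀJ₀ + βI)v = J₀ᵀ(y - f₀)`.
Hence `u = θ - θ₀ - v` solves `u' = -η(J₀ᵀJ₀ + βI)u`, and since `J₀ᵀJ₀` is positive semidefinite,
`(‖u‖²)' ≤ -2ηβ‖u‖²`. By Grönwall's inequality `u` decays exponentially, wherever it starts.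
-/

section Dissipative

open Set
open scoped Topology RealInnerProductSpace

variable {E : Type*} [NormedAddCommGroup E] [InnerProductSpace ℝ E] {u u' : ℝ → E} {K a b : ℝ}

theorem norm_le_mul_exp_of_inner_deriv_right_le (hu : ContinuousOn u (Icc a b))
    (hu' : ∀ t ∈ Ico a b, HasDerivWithinAt u (u' t) (Ici t) t)
    (bound : ∀ t ∈ Ico a b, ⟪u t, u' t⟫ ≤ K * ‖u t‖ ^ 2) :
    ∀ t ∈ Icc a b, ‖u t‖ ≤ ‖u a‖ * Real.exp (K * (t - a)) := by
  intro t ht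
  have norm_sq_le : ‖u t‖ ^ 2 ≤ gronwallBound (‖u a‖ ^ 2) (2 * K) 0 (t - a) :=
    le_gronwallBound_of_liminf_deriv_right_le (f := fun s => ‖u s‖ ^ 2)
      (f' := fun s => 2 * ⟪u s, u' s⟫) (hu.norm.pow 2)
      (fun s hs _ hr => (hu' s hs).norm_sq.liminf_right_slope_le hr) le_rfl
      (fun s hs => by linarith [bound s hs]) t ht
  refine le_of_sq_le_sq ?_ (by positivity)
  calc ‖u t‖ ^ 2 ≤ ‖u a‖ ^ 2 * Real.exp (2 * K * (t - a)) := by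
        rwa [gronwallBound_ε0] at norm_sq_le
    _ = (‖u a‖ * Real.exp (K * (t - a))) ^ 2 := by
        rw [mul_pow, ← Real.exp_nat_mul]
        push_cast
        ring_nf

theorem tendsto_of_inner_sub_deriv_right_le {x x' : ℝ → E} {e : E} {c : ℝ} (hc : 0 < c)
    (hx : ContinuousOn x (Ici a)) (hx' : ∀ t ∈ Ici a, HasDerivWithinAt x (x' t) (Ici t) t)
    (bound : ∀ t ∈ Ici a, ⟪x t - e, x' t⟫ ≤ -c * ‖x t - e‖ ^ 2) :
    Tendsto x atTop (𝓝 e) := by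
  have decay : ∀ t ∈ Ici a, ‖x t - e‖ ≤ ‖x a - e‖ * Real.exp (-c * (t - a)) := fun t ht =>
    norm_le_mul_exp_of_inner_deriv_right_le
      ((hx.mono Icc_subset_Ici_self).sub continuousOn_const)
      (fun s hs => (hx' s hs.1).sub_const e) (fun s hs => bound s hs.1) t (right_mem_Icc.2 ht)
  have exponent : Tendsto (fun t => -c * (t - a)) atTop atBot :=
    (tendsto_atTop_add_const_right _ (-a) tendsto_id).const_mul_atTop_of_neg (neg_lt_zero.2 hc)
  have envelope : Tendsto (fun t => ‖x a - e‖ * Real.exp (-c * (t - a))) atTop (𝓝 0) := by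
    simpa using (Real.tendsto_exp_atBot.comp exponent).const_mul ‖x a - e‖
  exact tendsto_iff_norm_sub_tendsto_zero.2 <|
    squeeze_zero' (.of_forall fun _ => norm_nonneg _)
      ((eventually_ge_atTop a).mono decay) envelope

theorem tendsto_of_hasDerivWithinAt_neg_mulVec_sub {n : Type*} [Fintype n] {A : Matrix n n ℝ}
    {x : ℝ → n → ℝ} {e : n → ℝ} {c : ℝ} (hc : 0 < c)
    (hA : ∀ w, c * (w ⬝ᵥ w) ≤ w ⬝ᵥ A *ᵥ w)
    (hx : ∀ t ∈ Ici a, HasDerivWithinAt x (-(A *ᵥ (x t - e))) (Ici a) t) :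
    Tendsto x atTop (𝓝 e) := by
  let L := (EuclideanSpace.equiv n ℝ).symm
  have hLx : ∀ t ∈ Ici a,
      HasDerivWithinAt (fun s => L (x s)) (L (-(A *ᵥ (x t - e)))) (Ici a) t := fun t ht =>
    L.hasFDerivAt.comp_hasDerivWithinAt t (hx t ht)
  have inner_L (v w : n → ℝ) : ⟪L v, L w⟫ = v ⬝ᵥ w :=
    (EuclideanSpace.inner_toLp_toLp v w).trans (dotProduct_comm w v)
  have tendsto_Lx : Tendsto (fun t => L (x t)) atTop (𝓝 (L e)) := by
    refine tendsto_of_inner_sub_deriv_right_le hc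
      (fun t ht => (hLx t ht).continuousWithinAt)
      (fun t ht => (hLx t ht).mono (Ici_subset_Ici.2 ht)) fun t _ => ?_
    rw [← map_sub, ← real_inner_self_eq_norm_sq, inner_L, inner_L, dotProduct_neg, neg_mul]
    exact neg_le_neg (hA _)
  simpa [Function.comp_def] using (L.symm.continuous.tendsto _).comp tendsto_Lx

end Dissipative

section Regularization

variable {m n R : Type*} [Fintype n] [DecidableEq n] [CommRing R]

theorem mul_add_smul_one_mul_mul_inv [Fintype m] [DecidableEq m] (B : Matrix m n R)
    (C : Matrix n m R) (β : R) (h : IsUnit (C * B + β • (1 : Matrix n n R))) :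
    (B * C + β • (1 : Matrix m m R)) * (B * (C * B + β • (1 : Matrix n n R))⁻¹) = B := by
  have push_through : (B * C + β • (1 : Matrix m m R)) * B = B * (C * B + β • 1) := by
    simp [Matrix.add_mul, Matrix.mul_add, Matrix.mul_assoc]
  rw [← Matrix.mul_assoc, push_through, Matrix.mul_assoc,
    Matrix.mul_nonsing_inv _ ((Matrix.isUnit_iff_isUnit_det _).1 h), Matrix.mul_one]

theorem mul_star_dotProduct_le_of_posSemidef [PartialOrder R] [StarRing R]
    [AddLeftMono R] {M : Matrix n n R} (hM : M.PosSemidef) (β : R) (w : n → R) :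
    β * (star w ⬝ᵥ w) ≤ star w ⬝ᵥ (M + β • (1 : Matrix n n R)) *ᵥ w := by
  rw [add_mulVec, smul_mulVec, one_mulVec, dotProduct_add, dotProduct_smul, smul_eq_mul]
  exact le_add_of_nonneg_left (hM.dotProduct_mulVec_nonneg w)

end Regularization

section Flow

open Set
open scoped Topology

variable {m m' n : Type*} [Fintype m] [DecidableEq m] [Fintype n] [DecidableEq n]
  {η β a : ℝ} {J₀ : Matrix m n ℝ} {θ₀ : n → ℝ} {f₀ y : m → ℝ} {θ : ℝ → n → ℝ}

theorem linearized_flow_parameters_limit (hη : 0 < η) (hβ : 0 < β)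
    (hθ : ∀ t ∈ Ici a, HasDerivWithinAt θ
      (-(η • ((J₀ᵀ * J₀ + β • (1 : Matrix n n ℝ)) *ᵥ (θ t - θ₀) + J₀ᵀ *ᵥ (f₀ - y)))) (Ici a) t) :
    Tendsto θ atTop
      (𝓝 (θ₀ + (J₀ᵀ * (J₀ * J₀ᵀ + β • (1 : Matrix m m ℝ))⁻¹) *ᵥ (y - f₀))) := by
  set A := J₀ᵀ * J₀ + β • (1 : Matrix n n ℝ)
  set v := (J₀ᵀ * (J₀ * J₀ᵀ + β • (1 : Matrix m m ℝ))⁻¹) *ᵥ (y - f₀)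
  have posSemidef_gram : (J₀ᵀ * J₀).PosSemidef := by
    simpa using posSemidef_conjTranspose_mul_self J₀
  have posDef_kernel : (J₀ * J₀ᵀ + β • (1 : Matrix m m ℝ)).PosDef :=
    .posSemidef_add (by simpa using posSemidef_self_mul_conjTranspose J₀) (PosDef.one.smul hβ)
  have equilibrium : A *ᵥ v = J₀ᵀ *ᵥ (y - f₀) := by
    rw [mulVec_mulVec, mul_add_smul_one_mul_mul_inv J₀ᵀ J₀ β posDef_kernel.isUnit]
  have coercive (w : n → ℝ) : η * β * (w ⬝ᵥ w) ≤ w ⬝ᵥ (η • A) *ᵥ w := by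
    rw [smul_mulVec, dotProduct_smul, smul_eq_mul, mul_assoc]
    exact mul_le_mul_of_nonneg_left
      (by simpa using mul_star_dotProduct_le_of_posSemidef posSemidef_gram β w) hη.le
  have flow (t : ℝ) (ht : t ∈ Ici a) :
      HasDerivWithinAt θ (-((η • A) *ᵥ (θ t - (θ₀ + v)))) (Ici a) t := by
    convert hθ t ht using 2
    rw [smul_mulVec, ← sub_sub, mulVec_sub, equilibrium, ← neg_sub y f₀, mulVec_neg,
      sub_eq_add_neg]
  exact tendsto_of_hasDerivWithinAt_neg_mulVec_sub (mul_pos hη hβ) coercive flow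

theorem linearized_flow_test_predictions_limit_general (J' : Matrix m' n ℝ) (f₀' : m' → ℝ)
    (hη : 0 < η) (hβ : 0 < β)
    (hθ : ∀ t ∈ Ici a, HasDerivWithinAt θ
      (-(η • ((J₀ᵀ * J₀ + β • (1 : Matrix n n ℝ)) *ᵥ (θ t - θ₀) + J₀ᵀ *ᵥ (f₀ - y)))) (Ici a) t) :
    Tendsto (fun t => f₀' + J' *ᵥ (θ t - θ₀)) atTop
      (𝓝 (f₀' + (J' * J₀ᵀ * (J₀ * J₀ᵀ + β • (1 : Matrix m m ℝ))⁻¹) *ᵥ (y - f₀))) := by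
  have predict : Continuous fun w : n → ℝ => f₀' + J' *ᵥ (w - θ₀) := by fun_prop
  simpa [Function.comp_def, Matrix.mul_assoc] using
    (predict.tendsto _).comp (linearized_flow_parameters_limit hη hβ hθ)

end Flow

/-- If `θ(t)` solves the regularized linearized gradient flow
`θ'(t) = −η[(J₀ᵀJ₀ + βI_p)(θ(t) − θ₀) + J₀ᵀ(f₀ − y)]`, `θ(0) = θ₀`, with `β > 0`,
then the linearized test predictions `f₀' + J'(θ(t) − θ₀)` converge as `t → ∞` to
`f₀' + Θ̂'(Θ̂ + βI_N)⁻¹(y − f₀)`, where `Θ̂ = J₀J₀ᵀ` and `Θ̂' = J'J₀ᵀ`. -/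
theorem linearized_flow_test_predictions_limit
    {N N' p : ℕ} (η β : ℝ) (hη : 0 < η) (hβ : 0 < β)
    (J₀ : Matrix (Fin N) (Fin p) ℝ) (J' : Matrix (Fin N') (Fin p) ℝ)
    (θ₀ : Fin p → ℝ) (f₀ y : Fin N → ℝ) (f₀' : Fin N' → ℝ)
    (θ : ℝ → Fin p → ℝ) (hθ0 : θ 0 = θ₀)
    (hθ : ∀ t : ℝ, 0 ≤ t →
      HasDerivAt θ
        (-(η • ((J₀ᵀ * J₀ + β • (1 : Matrix (Fin p) (Fin p) ℝ)).mulVec (θ t - θ₀) +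
          J₀ᵀ.mulVec (f₀ - y)))) t) :
    Tendsto (fun t : ℝ => f₀' + J'.mulVec (θ t - θ₀)) atTop
      (nhds (f₀' + ((J' * J₀ᵀ) *
        (J₀ * J₀ᵀ + β • (1 : Matrix (Fin N) (Fin N) ℝ))⁻¹).mulVec (y - f₀))) :=
  linearized_flow_test_predictions_limit_general J' f₀' hη hβ
    fun t ht => (hθ t ht).hasDerivWithinAt
end

section
/- Let η > 0, β ≥ 0, J₀ ∈ ℝ^{N×p}, θ₀ ∈ ℝ^p, f₀, y ∈ ℝ^N, and assume Θ̂ + βI_N is invertible, where Θ̂ := J₀J₀ᵀ. Define the gradient-descent sequence θ_0 := θ₀ and θ_{t+1} := θ_t − η[(J₀ᵀJ₀ + βI_p)(θ_t − θ₀) + J₀ᵀ(f₀ − y)]. Then for every natural number t, θ_t − θ₀ = J₀ᵀ(I_N − (I_N − η(Θ̂ + βI_N))^t)(Θ̂ + βI_N)^{-1}(y − f₀). -/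
open Matrix

/-
With `J = J₀` and `K = J₀ᵀ`, the intertwining `(K * J + β • 1) * K = K * (J * K + β • 1)` makes
gradient descent in parameter space the image under `K` of a Richardson iteration in output space,
with matrix `A = J * K + β • 1`. Unrolled from zero, that iteration is the geometric sum
`η • ∑ i ∈ range t, (1 - η • A) ^ i`, which becomes `1 - (1 - η • A) ^ t` when multiplied by `A`.
-/

lemma smul_geom_sum_one_sub_smul_mul {R S : Type*} [CommSemiring R] [Ring S] [Algebra R S]
    (r : R) (a : S) (t : ℕ) :
    (r • ∑ i ∈ Finset.range t, (1 - r • a) ^ i) * a = 1 - (1 - r • a) ^ t := by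
  rw [smul_mul_assoc, ← mul_smul_comm, ← geom_sum_mul_neg, sub_sub_cancel]

section Intertwining

variable {R m n : Type*} [Fintype m] [DecidableEq m] [Fintype n] [DecidableEq n]

lemma pow_mul_eq_mul_pow_of_mul_eq_mul [Semiring R] {A : Matrix m m R} {B : Matrix n n R}
    {K : Matrix n m R} (h : B * K = K * A) (i : ℕ) : B ^ i * K = K * A ^ i := by
  induction i with
  | zero => simp
  | succ i ih =>
    calc B ^ (i + 1) * K = B ^ i * (K * A) := by rw [pow_succ, Matrix.mul_assoc, h]
      _ = K * A ^ i * A := by rw [← Matrix.mul_assoc, ih]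
      _ = K * A ^ (i + 1) := by rw [Matrix.mul_assoc, ← pow_succ]

lemma geom_sum_mul_eq_mul_geom_sum_of_mul_eq_mul [Semiring R] {A : Matrix m m R}
    {B : Matrix n n R} {K : Matrix n m R} (h : B * K = K * A) (t : ℕ) :
    (∑ i ∈ Finset.range t, B ^ i) * K = K * ∑ i ∈ Finset.range t, A ^ i := by
  simp only [Matrix.sum_mul, Matrix.mul_sum, pow_mul_eq_mul_pow_of_mul_eq_mul h]

lemma mul_add_smul_one_mul_eq_mul_mul_add_smul_one [CommSemiring R] (b : R)
    (J : Matrix m n R) (K : Matrix n m R) :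
    (K * J + b • (1 : Matrix n n R)) * K = K * (J * K + b • (1 : Matrix m m R)) := by
  simp [Matrix.add_mul, Matrix.mul_add, Matrix.mul_assoc]

lemma one_sub_smul_mul_eq_mul_one_sub_smul_of_mul_eq_mul [CommRing R] {A : Matrix m m R}
    {B : Matrix n n R} {K : Matrix n m R} (h : B * K = K * A) (r : R) :
    (1 - r • B) * K = K * (1 - r • A) := by
  simp [Matrix.sub_mul, Matrix.mul_sub, h]

end Intertwining

section Richardson

variable {R m n : Type*} [CommRing R] [Fintype m] [DecidableEq m] [Fintype n]

lemma richardson_eq_geom_sum_mulVec [DecidableEq n] (r : R) (B : Matrix n n R) (b : n → R)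
    {x : ℕ → n → R} (hx0 : x 0 = 0) (hx : ∀ t, x (t + 1) = x t - r • (B *ᵥ x t - b)) (t : ℕ) :
    x t = (r • ∑ i ∈ Finset.range t, (1 - r • B) ^ i) *ᵥ b := by
  induction t with
  | zero => simp [hx0]
  | succ t ih =>
    have affine_step : x (t + 1) = (1 - r • B) *ᵥ x t + r • b := by
      rw [hx, sub_mulVec, one_mulVec, smul_mulVec, smul_sub]
      abel
    rw [affine_step, ih, mulVec_mulVec, geom_sum_succ, smul_add, add_mulVec, mul_smul_comm,
      smul_mulVec r 1, one_mulVec]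

lemma richardson_eq_mulVec_of_mul_eq_mul (r : R) {A : Matrix m m R} {B : Matrix n n R}
    {K : Matrix n m R} (h : B * K = K * A) (hA : IsUnit A) (w : m → R) {x : ℕ → n → R}
    (hx0 : x 0 = 0) (hx : ∀ t, x (t + 1) = x t - r • (B *ᵥ x t - K *ᵥ w)) (t : ℕ) :
    x t = K *ᵥ (((1 - (1 - r • A) ^ t) * A⁻¹) *ᵥ w) := by
  classical
  have geom_sum_eq : r • ∑ i ∈ Finset.range t, (1 - r • A) ^ i = (1 - (1 - r • A) ^ t) * A⁻¹ := by
    rw [← smul_geom_sum_one_sub_smul_mul,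
      mul_nonsing_inv_cancel_right _ _ ((isUnit_iff_isUnit_det A).mp hA)]
  calc x t
      = (r • ∑ i ∈ Finset.range t, (1 - r • B) ^ i) *ᵥ (K *ᵥ w) :=
        richardson_eq_geom_sum_mulVec r B _ hx0 hx t
    _ = K *ᵥ ((r • ∑ i ∈ Finset.range t, (1 - r • A) ^ i) *ᵥ w) := by
        rw [mulVec_mulVec, mulVec_mulVec, Matrix.smul_mul, Matrix.mul_smul,
          geom_sum_mul_eq_mul_geom_sum_of_mul_eq_mul
            (one_sub_smul_mul_eq_mul_one_sub_smul_of_mul_eq_mul h r)]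
    _ = K *ᵥ (((1 - (1 - r • A) ^ t) * A⁻¹) *ᵥ w) := by rw [geom_sum_eq]

/-- Gradient descent is the case `K = Jᵀ`; preconditioning the data gradient by `P` is the case
`K = P * Jᵀ`. -/
theorem regularized_gradient_descent_linearized_formula_general
    [DecidableEq n] (η β : R) (J : Matrix m n R) (K : Matrix n m R) (θ₀ : n → R) (f₀ y : m → R)
    (hinv : IsUnit (J * K + β • (1 : Matrix m m R))) (θ : ℕ → n → R) (hθ0 : θ 0 = θ₀)
    (hrec : ∀ t, θ (t + 1) =
      θ t - η • ((K * J + β • (1 : Matrix n n R)) *ᵥ (θ t - θ₀) + K *ᵥ (f₀ - y))) (t : ℕ) :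
    θ t - θ₀ = K *ᵥ (((1 - (1 - η • (J * K + β • (1 : Matrix m m R))) ^ t) *
      (J * K + β • (1 : Matrix m m R))⁻¹) *ᵥ (y - f₀)) := by
  refine richardson_eq_mulVec_of_mul_eq_mul (x := fun t ↦ θ t - θ₀) η
    (mul_add_smul_one_mul_eq_mul_mul_add_smul_one β J K) hinv (y - f₀)
    (sub_eq_zero.mpr hθ0) (fun t ↦ ?_) t
  rw [hrec, sub_right_comm, ← neg_sub y f₀, mulVec_neg, ← sub_eq_add_neg]

end Richardson

/-- For the gradient-descent recursion
`θ_{t+1} = θ_t − η[(J₀ᵀJ₀ + βI_p)(θ_t − θ₀) + J₀ᵀ(f₀ − y)]`, `θ_0 = θ₀`,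
with `Θ̂ + βI_N` invertible (`Θ̂ = J₀J₀ᵀ`), one has for every `t ∈ ℕ`
`θ_t − θ₀ = J₀ᵀ(I − (I − η(Θ̂ + βI))^t)(Θ̂ + βI)⁻¹(y − f₀)`. -/
theorem regularized_gradient_descent_linearized_formula
    {N p : ℕ} (η β : ℝ) (hη : 0 < η) (hβ : 0 ≤ β)
    (J₀ : Matrix (Fin N) (Fin p) ℝ) (θ₀ : Fin p → ℝ) (f₀ y : Fin N → ℝ)
    (hinv : IsUnit (J₀ * J₀ᵀ + β • (1 : Matrix (Fin N) (Fin N) ℝ)))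
    (θ : ℕ → Fin p → ℝ) (hθ0 : θ 0 = θ₀)
    (hrec : ∀ t : ℕ, θ (t + 1) = θ t -
      η • ((J₀ᵀ * J₀ + β • (1 : Matrix (Fin p) (Fin p) ℝ)).mulVec (θ t - θ₀) +
        J₀ᵀ.mulVec (f₀ - y))) :
    ∀ t : ℕ,
      θ t - θ₀ = J₀ᵀ.mulVec
        ((((1 : Matrix (Fin N) (Fin N) ℝ) -
            ((1 : Matrix (Fin N) (Fin N) ℝ) -
              η • (J₀ * J₀ᵀ + β • (1 : Matrix (Fin N) (Fin N) ℝ))) ^ t) *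
          (J₀ * J₀ᵀ + β • (1 : Matrix (Fin N) (Fin N) ℝ))⁻¹).mulVec (y - f₀)) :=
  regularized_gradient_descent_linearized_formula_general η β J₀ J₀ᵀ θ₀ f₀ y hinv θ hθ0 hrec
end

section
/- Let A ∈ ℝ^{p×p} be symmetric with ⟨v, Av⟩ ≥ c‖v‖² for all v ∈ ℝ^p, where c > 0, let η > 0 and D ≥ 0, and let Δ : [0,∞) → ℝ^p be continuous with ‖Δ(t)‖ ≤ D for all t ≥ 0. If x : [0,∞) → ℝ^p is a continuously differentiable solution of x'(t) = −ηA x(t) − ηΔ(t) with x(0) = 0, then ‖x(t)‖ ≤ D/c for all t ≥ 0. -/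
open Matrix
open scoped RealInnerProductSpace

/-!
Every ball of radius `R > D / c` is forward invariant: on its boundary sphere the coercive drift
points strictly inwards, since `⟪x, x'⟫ ≤ -η * ‖x‖ * (c * ‖x‖ - D) < 0`. Letting `R` decrease to
`D / c` gives the bound.
-/

section InnerProductSpace

variable {E : Type*} [NormedAddCommGroup E] [InnerProductSpace ℝ E]

theorem norm_le_of_inner_deriv_right_neg_of_norm_eq {x x' : ℝ → E} {a R : ℝ}
    (hx : ContinuousOn x (Set.Ici a))
    (hx' : ∀ t, a ≤ t → HasDerivWithinAt x (x' t) (Set.Ici t) t) (ha : ‖x a‖ ≤ R)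
    (hneg : ∀ t, a ≤ t → ‖x t‖ = R → ⟪x t, x' t⟫ < 0) {t : ℝ} (ht : a ≤ t) :
    ‖x t‖ ≤ R := by
  have hR : 0 ≤ R := (norm_nonneg _).trans ha
  have hsq : ‖x t‖ ^ 2 ≤ R ^ 2 := by
    refine image_le_of_deriv_right_lt_deriv_boundary (f := fun s ↦ ‖x s‖ ^ 2)
      (B := fun _ ↦ R ^ 2) ((hx.mono Set.Icc_subset_Ici_self).norm.pow 2)
      (fun s hs ↦ (hx' s hs.1).norm_sq) (by gcongr) (fun s ↦ hasDerivAt_const s (R ^ 2))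
      (fun s hs hsphere ↦ ?_) ⟨ht, le_rfl⟩
    have hnorm : ‖x s‖ = R := (sq_eq_sq₀ (norm_nonneg _) hR).mp hsphere
    linarith [hneg s hs.1 hnorm]
  exact (sq_le_sq₀ (norm_nonneg _) hR).mp hsq

theorem inner_neg_smul_sub_smul_neg_of_coercive {v w d : E} {c η D : ℝ} (hc : 0 < c) (hη : 0 < η)
    (hw : c * ‖v‖ ^ 2 ≤ ⟪v, w⟫) (hd : ‖d‖ ≤ D) (hv : D / c < ‖v‖) :
    ⟪v, -(η • w) - η • d⟫ < 0 := by
  have hDv : D < c * ‖v‖ := (div_lt_iff₀' hc).mp hv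
  have hv_pos : 0 < ‖v‖ := pos_of_mul_pos_right (((norm_nonneg d).trans hd).trans_lt hDv) hc.le
  have hvd : -(‖v‖ * D) ≤ ⟪v, d⟫ :=
    calc -(‖v‖ * D) ≤ -(‖v‖ * ‖d‖) := by gcongr
      _ ≤ ⟪v, d⟫ := neg_le_of_abs_le (abs_real_inner_le_norm v d)
  calc ⟪v, -(η • w) - η • d⟫ = -(η * (⟪v, w⟫ + ⟪v, d⟫)) := by
        rw [inner_sub_right, inner_neg_right, real_inner_smul_right, real_inner_smul_right]
        ring
    _ ≤ -(η * (c * ‖v‖ ^ 2 + -(‖v‖ * D))) := by gcongr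
    _ = -(η * (‖v‖ * (c * ‖v‖ - D))) := by ring
    _ < 0 := neg_lt_zero.mpr (mul_pos hη (mul_pos hv_pos (sub_pos.mpr hDv)))

theorem perturbed_linear_flow_bound_general {F : E → E} {Δ x : ℝ → E} {c η D : ℝ}
    (hc : 0 < c) (hη : 0 < η) (hF : ∀ v, c * ‖v‖ ^ 2 ≤ ⟪v, F v⟫)
    (hΔ : ∀ t, 0 ≤ t → ‖Δ t‖ ≤ D) (hx : ContinuousOn x (Set.Ici 0))
    (hx' : ∀ t, 0 ≤ t → HasDerivWithinAt x (-(η • F (x t)) - η • Δ t) (Set.Ici t) t)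
    (hx0 : ‖x 0‖ ≤ D / c) {t : ℝ} (ht : 0 ≤ t) :
    ‖x t‖ ≤ D / c := by
  refine le_of_forall_gt_imp_ge_of_dense fun R hR ↦ ?_
  refine norm_le_of_inner_deriv_right_neg_of_norm_eq hx hx' (hx0.trans hR.le)
    (fun s hs hsphere ↦ ?_) ht
  exact inner_neg_smul_sub_smul_neg_of_coercive hc hη (hF (x s)) (hΔ s hs) (hsphere ▸ hR)

end InnerProductSpace

/-- Let `A` be symmetric with `⟨v, Av⟩ ≥ c‖v‖²` (`c > 0`), `η > 0`,
`D ≥ 0`, and let `Δ : [0,∞) → ℝ^p` be continuous with `‖Δ(t)‖ ≤ D`.  If `x` solves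
`x'(t) = −ηA x(t) − ηΔ(t)` with `x(0) = 0`, then `‖x(t)‖ ≤ D/c` for all `t ≥ 0`. -/
theorem perturbed_linear_flow_bound
    {p : ℕ} (A : Matrix (Fin p) (Fin p) ℝ) (hA : A.IsSymm) (c η D : ℝ)
    (hc : 0 < c) (hη : 0 < η) (hD : 0 ≤ D)
    (hcA : ∀ v : EuclideanSpace ℝ (Fin p), c * ‖v‖ ^ 2 ≤ ⟪v, Matrix.toEuclideanLin A v⟫)
    (Δ : ℝ → EuclideanSpace ℝ (Fin p)) (hΔcont : ContinuousOn Δ (Set.Ici (0 : ℝ)))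
    (hΔ : ∀ t : ℝ, 0 ≤ t → ‖Δ t‖ ≤ D)
    (x : ℝ → EuclideanSpace ℝ (Fin p)) (hx0 : x 0 = 0)
    (hx : ∀ t : ℝ, 0 ≤ t →
      HasDerivAt x (-(η • Matrix.toEuclideanLin A (x t)) - η • Δ t) t) :
    ∀ t : ℝ, 0 ≤ t → ‖x t‖ ≤ D / c := by
  have hx0_le : ‖x 0‖ ≤ D / c := by simpa [hx0] using div_nonneg hD hc.le
  exact fun t ht ↦ perturbed_linear_flow_bound_general hc hη hcA hΔ (HasDerivAt.continuousOn hx)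
    (fun s hs ↦ (hx s hs).hasDerivWithinAt) hx0_le ht
end

section
/- Let F : ℝ^p → ℝ^k be continuously differentiable with Jacobian DF, let θ : [0,∞) → ℝ^p be continuously differentiable with θ(0) = θ₀, and suppose there exist ε ≥ 0, a ≥ 0 and b > 0 such that ‖DF(θ(t)) − DF(θ₀)‖_op ≤ ε and ‖θ'(t)‖ ≤ a e^{−bt} for all t ≥ 0. Then for all t ≥ 0, the linearization error satisfies ‖F(θ(t)) − F(θ₀) − DF(θ₀)(θ(t) − θ₀)‖ ≤ εa/b. -/
/-!
For a fixed linear map `A`, such as `DF(θ₀)`, the error `F(θ(t)) - F(θ₀) - A(θ(t) - θ₀)` is the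
increment of `(F - A) ∘ θ` from time `0` to time `t`. The velocity `(DF(θ(t)) - A) θ'(t)` of this
curve has norm at most `ε a e^{-bt}`, so the increment is at most `∫₀^∞ ε a e^{-bs} ds = ε a / b`.
-/

open Set

section ExponentialSpeed

variable {E : Type*} [NormedAddCommGroup E] [NormedSpace ℝ E]

lemma hasDerivAt_div_mul_exp_sub_exp {b : ℝ} (hb : b ≠ 0) (c t₀ t : ℝ) :
    HasDerivAt (fun s ↦ c / b * (Real.exp (-(b * t₀)) - Real.exp (-(b * s))))
      (c * Real.exp (-(b * t))) t := by
  have hexp : HasDerivAt (fun s ↦ Real.exp (-(b * s))) (Real.exp (-(b * t)) * -b) t := by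
    simpa using (((hasDerivAt_id t).const_mul b).neg).exp
  refine ((hexp.const_sub _).const_mul (c / b)).congr_deriv ?_
  field_simp

lemma norm_image_sub_le_exp_sub_exp_of_norm_deriv_right_le_exp {f f' : ℝ → E}
    {b c t₀ t₁ : ℝ} (hb : b ≠ 0)
    (hf : ContinuousOn f (Icc t₀ t₁))
    (hf' : ∀ t ∈ Ico t₀ t₁, HasDerivWithinAt f (f' t) (Ici t) t)
    (hbound : ∀ t ∈ Ico t₀ t₁, ‖f' t‖ ≤ c * Real.exp (-(b * t))) {t : ℝ}
    (ht : t ∈ Icc t₀ t₁) :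
    ‖f t - f t₀‖ ≤ c / b * (Real.exp (-(b * t₀)) - Real.exp (-(b * t))) :=
  image_norm_le_of_norm_deriv_right_le_deriv_boundary (hf.sub continuousOn_const)
    (fun s hs ↦ (hf' s hs).sub_const _) (by simp)
    (hasDerivAt_div_mul_exp_sub_exp hb c t₀) hbound ht

lemma norm_image_sub_le_exp_of_norm_deriv_right_le_exp {f f' : ℝ → E} {b c t₀ : ℝ} (hb : 0 < b)
    (hf : ContinuousOn f (Ici t₀))
    (hf' : ∀ t, t₀ ≤ t → HasDerivWithinAt f (f' t) (Ici t) t)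
    (hbound : ∀ t, t₀ ≤ t → ‖f' t‖ ≤ c * Real.exp (-(b * t))) {t : ℝ} (ht : t₀ ≤ t) :
    ‖f t - f t₀‖ ≤ c / b * Real.exp (-(b * t₀)) := by
  have hc : 0 ≤ c :=
    nonneg_of_mul_nonneg_left ((norm_nonneg _).trans (hbound t₀ le_rfl)) (Real.exp_pos _)
  calc ‖f t - f t₀‖ ≤ c / b * (Real.exp (-(b * t₀)) - Real.exp (-(b * t))) :=
        norm_image_sub_le_exp_sub_exp_of_norm_deriv_right_le_exp hb.ne'
          (hf.mono Icc_subset_Ici_self) (fun s hs ↦ hf' s hs.1) (fun s hs ↦ hbound s hs.1)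
          ⟨ht, le_rfl⟩
    _ ≤ c / b * Real.exp (-(b * t₀)) := by
        gcongr
        exact sub_le_self _ (Real.exp_nonneg _)

end ExponentialSpeed

theorem linearization_error_bound_flow_general
    {E G : Type*} [NormedAddCommGroup E] [NormedSpace ℝ E]
    [NormedAddCommGroup G] [NormedSpace ℝ G]
    {F : E → G} {F' : E → E →L[ℝ] G} {A : E →L[ℝ] G} {θ θ' : ℝ → E} {ε a b : ℝ} (hb : 0 < b)
    (hF : ∀ t, 0 ≤ t → HasFDerivAt F (F' (θ t)) (θ t))
    (hθ : ContinuousOn θ (Ici 0))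
    (hθ' : ∀ t, 0 ≤ t → HasDerivWithinAt θ (θ' t) (Ici t) t)
    (hJ : ∀ t, 0 ≤ t → ‖F' (θ t) - A‖ ≤ ε)
    (hspeed : ∀ t, 0 ≤ t → ‖θ' t‖ ≤ a * Real.exp (-(b * t))) {t : ℝ} (ht : 0 ≤ t) :
    ‖F (θ t) - F (θ 0) - A (θ t - θ 0)‖ ≤ ε * a / b := by
  have hdiff : ∀ s, 0 ≤ s → HasFDerivAt (fun x ↦ F x - A x) (F' (θ s) - A) (θ s) :=
    fun s hs ↦ (hF s hs).sub A.hasFDerivAt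
  have hcont : ContinuousOn (fun s ↦ F (θ s) - A (θ s)) (Ici 0) :=
    fun s hs ↦ (hdiff s hs).continuousAt.comp_continuousWithinAt (hθ s hs)
  have hderiv : ∀ s, 0 ≤ s →
      HasDerivWithinAt (fun s ↦ F (θ s) - A (θ s)) ((F' (θ s) - A) (θ' s)) (Ici s) s :=
    fun s hs ↦ (hdiff s hs).comp_hasDerivWithinAt s (hθ' s hs)
  have hbound : ∀ s, 0 ≤ s → ‖(F' (θ s) - A) (θ' s)‖ ≤ ε * a * Real.exp (-(b * s)) :=
    fun s hs ↦ by
      simpa only [mul_assoc] using (F' (θ s) - A).le_of_opNorm_le_of_le (hJ s hs) (hspeed s hs)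
  calc ‖F (θ t) - F (θ 0) - A (θ t - θ 0)‖
      = ‖(F (θ t) - A (θ t)) - (F (θ 0) - A (θ 0))‖ := by rw [map_sub, sub_sub_sub_comm]
    _ ≤ ε * a / b * Real.exp (-(b * 0)) :=
        norm_image_sub_le_exp_of_norm_deriv_right_le_exp hb hcont hderiv hbound ht
    _ = ε * a / b := by simp

/-- If `F : ℝ^p → ℝ^k` is `C¹`, `θ` is a `C¹` curve with `θ(0) = θ₀`,
`‖DF(θ(t)) − DF(θ₀)‖_op ≤ ε` and `‖θ'(t)‖ ≤ a e^{−bt}` for all `t ≥ 0`, then the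
linearization error satisfies
`‖F(θ(t)) − F(θ₀) − DF(θ₀)(θ(t) − θ₀)‖ ≤ εa/b` for all `t ≥ 0`. -/
theorem linearization_error_bound_flow
    {p k : ℕ} (F : EuclideanSpace ℝ (Fin p) → EuclideanSpace ℝ (Fin k))
    (hF : ContDiff ℝ 1 F)
    (θ₀ : EuclideanSpace ℝ (Fin p)) (θ θ' : ℝ → EuclideanSpace ℝ (Fin p))
    (hθ0 : θ 0 = θ₀)
    (hderiv : ∀ t : ℝ, HasDerivAt θ (θ' t) t) (hcont : Continuous θ')
    (ε a b : ℝ) (hε : 0 ≤ ε) (ha : 0 ≤ a) (hb : 0 < b)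
    (hJ : ∀ t : ℝ, 0 ≤ t → ‖fderiv ℝ F (θ t) - fderiv ℝ F θ₀‖ ≤ ε)
    (hspeed : ∀ t : ℝ, 0 ≤ t → ‖θ' t‖ ≤ a * Real.exp (-(b * t))) :
    ∀ t : ℝ, 0 ≤ t →
      ‖F (θ t) - F θ₀ - fderiv ℝ F θ₀ (θ t - θ₀)‖ ≤ ε * a / b := by
  subst hθ0
  exact fun t ht ↦ linearization_error_bound_flow_general hb
    (fun s _ ↦ (hF.differentiable one_ne_zero (θ s)).hasFDerivAt)
    (fun s _ ↦ (hderiv s).continuousAt.continuousWithinAt)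
    (fun s _ ↦ (hderiv s).hasDerivWithinAt) hJ hspeed ht
end

section
/- Let F : ℝ^p → ℝ^k be continuously differentiable with Jacobian DF, let (θ_t)_{t∈ℕ} be a sequence in ℝ^p, and suppose there exist ε ≥ 0, a ≥ 0, η > 0 and c > 0 with 0 < ηc < 1 such that for every t: ‖θ_{t+1} − θ_t‖ ≤ ηa(1 − ηc)^t, and ‖DF(ξ) − DF(θ₀)‖_op ≤ ε for every ξ on the segment joining θ_t and θ_{t+1}. Then for every t ∈ ℕ, ‖F(θ_t) − F(θ₀) − DF(θ₀)(θ_t − θ₀)‖ ≤ εa/c. -/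
/-!
The map `F - φ`, where `φ = DF(θ₀)`, is `ε`-Lipschitz on each segment `[θ_t, θ_{t+1}]` by the mean
value inequality. Hence the image of the polygonal path through the `θ_t` under `F - φ` has length
at most `ε` times the length of the path, and a geometric series bounds the latter by
`ηa / (1 - (1 - ηc)) = a / c`.
-/

section Metric

variable {X : Type*} [PseudoMetricSpace X]

theorem sum_dist_le_of_le_geometric {u : ℕ → X} {K r : ℝ} (hr : r < 1)
    (hu : ∀ t, dist (u t) (u (t + 1)) ≤ K * r ^ t) (n : ℕ) :
    ∑ t ∈ Finset.range n, dist (u t) (u (t + 1)) ≤ K / (1 - r) :=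
  calc
    ∑ t ∈ Finset.range n, dist (u t) (u (t + 1)) ≤ ∑ t ∈ Finset.range n, K * r ^ t :=
      Finset.sum_le_sum fun t _ ↦ hu t
    _ ≤ K / (1 - r) :=
      sum_le_hasSum _ (fun t _ ↦ dist_nonneg.trans (hu t)) (aux_hasSum_of_le_geometric hr hu)

end Metric

section Linearization

variable {𝕜 E G : Type*} [NontriviallyNormedField 𝕜] [IsRCLikeNormedField 𝕜]
  [NormedAddCommGroup E] [NormedSpace ℝ E] [NormedSpace 𝕜 E]
  [NormedAddCommGroup G] [NormedSpace 𝕜 G]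
  {F : E → G} {F' : E → E →L[𝕜] G} {φ : E →L[𝕜] G} {θ : ℕ → E}

theorem norm_image_sub_sub_map_le_sum {ε : ℕ → ℝ}
    (hF : ∀ t, ∀ ξ ∈ segment ℝ (θ t) (θ (t + 1)),
      HasFDerivWithinAt F (F' ξ) (segment ℝ (θ t) (θ (t + 1))) ξ)
    (hφ : ∀ t, ∀ ξ ∈ segment ℝ (θ t) (θ (t + 1)), ‖F' ξ - φ‖ ≤ ε t) (n : ℕ) :
    ‖F (θ n) - F (θ 0) - φ (θ n - θ 0)‖ ≤
      ∑ t ∈ Finset.range n, ε t * dist (θ t) (θ (t + 1)) := by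
  have dist_sub_map (x y : E) : dist (F x - φ x) (F y - φ y) = ‖F y - F x - φ (y - x)‖ := by
    rw [dist_comm, dist_eq_norm, map_sub, sub_sub_sub_comm]
  have step_le (t : ℕ) : dist (F (θ t) - φ (θ t)) (F (θ (t + 1)) - φ (θ (t + 1))) ≤
      ε t * dist (θ t) (θ (t + 1)) := by
    rw [dist_sub_map, dist_comm, dist_eq_norm]
    exact (convex_segment _ _).norm_image_sub_le_of_norm_hasFDerivWithin_le' (hF t) (hφ t)
      (left_mem_segment ℝ _ _) (right_mem_segment ℝ _ _)
  rw [← dist_sub_map]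
  exact dist_le_range_sum_of_dist_le (f := fun t ↦ F (θ t) - φ (θ t)) n fun _ ↦ step_le _

theorem linearization_error_bound_discrete_general {ε K r : ℝ} (hr : r < 1)
    (hF : ∀ t, ∀ ξ ∈ segment ℝ (θ t) (θ (t + 1)),
      HasFDerivWithinAt F (F' ξ) (segment ℝ (θ t) (θ (t + 1))) ξ)
    (hφ : ∀ t, ∀ ξ ∈ segment ℝ (θ t) (θ (t + 1)), ‖F' ξ - φ‖ ≤ ε)
    (hstep : ∀ t, ‖θ (t + 1) - θ t‖ ≤ K * r ^ t) (n : ℕ) :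
    ‖F (θ n) - F (θ 0) - φ (θ n - θ 0)‖ ≤ ε * (K / (1 - r)) := by
  have hε : 0 ≤ ε := (norm_nonneg _).trans (hφ 0 _ (left_mem_segment ℝ _ _))
  have hdist (t : ℕ) : dist (θ t) (θ (t + 1)) ≤ K * r ^ t := by
    simpa only [dist_eq_norm'] using hstep t
  calc
    ‖F (θ n) - F (θ 0) - φ (θ n - θ 0)‖ ≤ ∑ t ∈ Finset.range n, ε * dist (θ t) (θ (t + 1)) :=
      norm_image_sub_sub_map_le_sum hF hφ n
    _ = ε * ∑ t ∈ Finset.range n, dist (θ t) (θ (t + 1)) := (Finset.mul_sum _ _ _).symm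
    _ ≤ ε * (K / (1 - r)) := by gcongr; exact sum_dist_le_of_le_geometric hr hdist n

end Linearization

/-- If `F : ℝ^p → ℝ^k` is `C¹`, `(θ_t)` is a sequence with
`‖θ_{t+1} − θ_t‖ ≤ ηa(1 − ηc)^t` and `‖DF(ξ) − DF(θ₀)‖_op ≤ ε` for every `ξ` on the
segment joining `θ_t` and `θ_{t+1}` (where `0 < ηc < 1`), then for every `t ∈ ℕ`,
`‖F(θ_t) − F(θ₀) − DF(θ₀)(θ_t − θ₀)‖ ≤ εa/c`. -/
theorem linearization_error_bound_discrete
    {p k : ℕ} (F : EuclideanSpace ℝ (Fin p) → EuclideanSpace ℝ (Fin k))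
    (hF : ContDiff ℝ 1 F)
    (θ : ℕ → EuclideanSpace ℝ (Fin p))
    (ε a η c : ℝ) (hε : 0 ≤ ε) (ha : 0 ≤ a) (hη : 0 < η) (hc : 0 < c)
    (hηc : η * c < 1)
    (hstep : ∀ t : ℕ, ‖θ (t + 1) - θ t‖ ≤ η * a * (1 - η * c) ^ t)
    (hJ : ∀ t : ℕ, ∀ ξ ∈ segment ℝ (θ t) (θ (t + 1)),
      ‖fderiv ℝ F ξ - fderiv ℝ F (θ 0)‖ ≤ ε) :
    ∀ t : ℕ,
      ‖F (θ t) - F (θ 0) - fderiv ℝ F (θ 0) (θ t - θ 0)‖ ≤ ε * a / c := by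
  simpa only [sub_sub_cancel, mul_div_mul_left _ _ hη.ne', mul_div_assoc] using
    linearization_error_bound_discrete_general (sub_lt_self 1 (mul_pos hη hc))
      (fun _ ξ _ ↦ ((hF.differentiable one_ne_zero) ξ).hasFDerivAt.hasFDerivWithinAt) hJ hstep
end
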